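/- Let k be a field of characteristic 0, let A = k[x,y], let S be the localization of A away from x (so S = k[x, x⁻¹, y]), and let R' be the subring of A consisting of all polynomials p with p(0,0) = p(1,1), viewed as a subring of S. Let F be the k-algebra automorphism of S determined by F(x) = x and F(y) = x·y. Then: F(R') ⊆ R'; every ideal of height 1 in R' generates a proper ideal in S; but the restriction of F to R' is not a surjective map R' → R' (hence not an automorphism). (Thus the hypothesis that the variety Spec R' has no selfintersection points cannot be dropped from the main theorem: R' is the coordinate ring of the plane with the points (0,0) and (1,1) identified, which has a selfintersection point.) -/

import Mathlib

/-!
The key point is the prime `q = xA ∩ R'` of `R'`.  An element `x * h` of `A` lies in `R'` exactly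
when `h(1,1) = 0`, so every `g ∈ q` vanishes at both `(0,0)` and `(1,1)`; hence `g * A ⊆ R'`, and
even `g ^ m * s ∈ R'` for any `s ∈ S` and large `m`.

Let `p` be a prime of height at most one with `pS = S`.  Clearing denominators in `1 ∈ pS` by a
power of `g ∈ q` shows `g ^ n ∈ p`, so `0 ≠ q ≤ p`, and the height bound forces `p = q`.  But
`qS` lies in the kernel of evaluation at `(1,1)`, which is defined on all of `S`: a contradiction.

For the automorphism, `p(x, xy)` has the same values as `p` at `(0,0)` and `(1,1)`, so `F` preserves
`R'`; and `F` misses `y - x ∈ R'`, because `p(x, xy)` is constant on the line `x = 0`.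
-/

/-- The height of an ideal `I`: the infimum of the heights of the prime ideals
containing `I` (in the prime spectrum, ordered by inclusion). -/
noncomputable def Ideal.heightOf {R : Type*} [CommRing R] (I : Ideal R) : ℕ∞ :=
  ⨅ p ∈ {p : PrimeSpectrum R | I ≤ p.asIdeal}, Order.height p

/-- The polynomial ring `A = k[x,y]` in two variables. -/
abbrev SelfintPolyRing (k : Type*) [Field k] := MvPolynomial (Fin 2) k

/-- The localization `S = k[x, x⁻¹, y]` of `k[x,y]` away from `x`. -/
abbrev SelfintLocRing (k : Type*) [Field k] :=
  Localization.Away (MvPolynomial.X 0 : SelfintPolyRing k)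

/-- The subring `R' = {p ∈ k[x,y] : p(0,0) = p(1,1)}` of `k[x,y]`, viewed inside
`S = k[x, x⁻¹, y]`.  It is the coordinate ring of the plane with the points `(0,0)` and
`(1,1)` identified, a variety with a selfintersection point. -/
noncomputable abbrev SelfintSubring (k : Type*) [Field k] :
    Subalgebra k (SelfintLocRing k) :=
  (AlgHom.equalizer
      (MvPolynomial.aeval (fun _ : Fin 2 => (0 : k)))
      (MvPolynomial.aeval (fun _ : Fin 2 => (1 : k)))).map
    (IsScalarTower.toAlgHom k (SelfintPolyRing k) (SelfintLocRing k))

open MvPolynomial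

namespace Selfint

variable (k : Type*) [Field k]

theorem mem_subring {s : SelfintLocRing k} : s ∈ SelfintSubring k ↔
    ∃ a : SelfintPolyRing k, aeval (fun _ : Fin 2 => (0 : k)) a = aeval (fun _ : Fin 2 => (1 : k)) a ∧
      algebraMap (SelfintPolyRing k) (SelfintLocRing k) a = s := by
  simp [SelfintSubring, Subalgebra.mem_map, AlgHom.mem_equalizer]

theorem algebraMap_inj :
    Function.Injective (algebraMap (SelfintPolyRing k) (SelfintLocRing k)) :=
  IsLocalization.injective _ (powers_le_nonZeroDivisors_of_noZeroDivisors (X_ne_zero 0))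

/-- The substitution homomorphism `S → B` sending `x` to the unit `u` and `y` to `v`. -/
noncomputable def subst {B : Type*} [CommRing B] [Algebra k B] (u v : B) (hu : IsUnit u) :
    SelfintLocRing k →ₐ[k] B :=
  IsLocalization.liftAlgHom (M := Submonoid.powers (X 0 : SelfintPolyRing k))
    (f := aeval ![u, v]) (by
      rintro ⟨_, n, rfl⟩
      simpa using hu.pow n)

theorem subst_algebraMap {B : Type*} [CommRing B] [Algebra k B] (u v : B) (hu : IsUnit u)
    (a : SelfintPolyRing k) :
    subst k u v hu (algebraMap _ _ a) = aeval ![u, v] a := by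
  simp [subst]

theorem isUnit_x :
    IsUnit (algebraMap (SelfintPolyRing k) (SelfintLocRing k) (X 0)) :=
  IsLocalization.Away.algebraMap_isUnit _

theorem algHom_ext {B : Type*} [CommRing B] [Algebra k B] {f g : SelfintLocRing k →ₐ[k] B}
    (h : ∀ i, f (algebraMap (SelfintPolyRing k) _ (X i)) = g (algebraMap (SelfintPolyRing k) _ (X i))) :
    f = g := by
  apply IsLocalization.algHom_ext (Submonoid.powers (X 0 : SelfintPolyRing k))
  exact MvPolynomial.algHom_ext h

/-- The automorphism `x ↦ x`, `y ↦ x * y` of `S`, with inverse `x ↦ x`, `y ↦ x⁻¹ * y`. -/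
noncomputable def auto : SelfintLocRing k ≃ₐ[k] SelfintLocRing k :=
  AlgEquiv.ofAlgHom
    (subst k (algebraMap (SelfintPolyRing k) _ (X 0)) (algebraMap (SelfintPolyRing k) _ (X 0 * X 1))
      (isUnit_x k))
    (subst k (algebraMap (SelfintPolyRing k) _ (X 0))
      (IsLocalization.Away.invSelf (X 0 : SelfintPolyRing k) *
        algebraMap (SelfintPolyRing k) _ (X 1)) (isUnit_x k))
    (by
      -- The image of `x⁻¹` is recovered from the image of `x`.
      have key := congrArg (subst k (algebraMap (SelfintPolyRing k) (SelfintLocRing k) (X 0))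
        (algebraMap (SelfintPolyRing k) _ (X 0 * X 1)) (isUnit_x k))
        (IsLocalization.Away.mul_invSelf (S := SelfintLocRing k) (X 0 : SelfintPolyRing k))
      rw [map_mul, map_one, subst_algebraMap] at key
      simp only [aeval_X, Matrix.cons_val_zero] at key
      apply algHom_ext
      intro i
      fin_cases i
      · simp [subst_algebraMap]
      · simp only [Fin.mk_one, AlgHom.comp_apply, subst_algebraMap, aeval_X, Matrix.cons_val_one,
          map_mul, AlgHom.id_apply, Matrix.cons_val_fin_one]
        simp only [map_mul] at key
        linear_combination (algebraMap (SelfintPolyRing k) (SelfintLocRing k) (X 1)) * key)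
    (by
      have key := IsLocalization.Away.mul_invSelf (S := SelfintLocRing k) (X 0 : SelfintPolyRing k)
      apply algHom_ext
      intro i
      fin_cases i
      · simp [subst_algebraMap]
      · simp only [Fin.mk_one, AlgHom.comp_apply, subst_algebraMap, aeval_X, Matrix.cons_val_one,
          Matrix.cons_val_zero, map_mul, AlgHom.id_apply, Matrix.cons_val_fin_one]
        linear_combination (algebraMap (SelfintPolyRing k) (SelfintLocRing k) (X 1)) * key)

theorem auto_algebraMap (a : SelfintPolyRing k) :
    auto k (algebraMap _ _ a) = algebraMap _ (SelfintLocRing k)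
      (aeval ![(X 0 : SelfintPolyRing k), X 0 * X 1] a) := by
  have h : (IsScalarTower.toAlgHom k (SelfintPolyRing k) (SelfintLocRing k)).comp
      (aeval ![(X 0 : SelfintPolyRing k), X 0 * X 1]) =
      aeval ![algebraMap (SelfintPolyRing k) (SelfintLocRing k) (X 0),
        algebraMap (SelfintPolyRing k) _ (X 0 * X 1)] := by
    apply MvPolynomial.algHom_ext
    intro i
    fin_cases i <;> simp
  exact (subst_algebraMap k _ _ (isUnit_x k) a).trans (DFunLike.congr_fun h a).symm

theorem aeval_substitution (c d : k) (a : SelfintPolyRing k) :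
    aeval ![c, d] (aeval ![(X 0 : SelfintPolyRing k), X 0 * X 1] a) = aeval ![c, c * d] a := by
  have h : (aeval ![c, d]).comp (aeval ![(X 0 : SelfintPolyRing k), X 0 * X 1]) =
      aeval (R := k) ![c, c * d] := by
    apply MvPolynomial.algHom_ext
    intro i
    fin_cases i <;> simp
  exact DFunLike.congr_fun h a

theorem const_eq {α : Type*} (c : α) : (fun _ : Fin 2 => c) = ![c, c] := by
  ext i
  fin_cases i <;> rfl

/-- The prime `xA ∩ R'` of `R'`. -/
def q : Ideal (SelfintSubring k) where
  carrier := {g | ∃ h : SelfintPolyRing k, algebraMap _ (SelfintLocRing k) (X 0 * h) = g.1}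
  add_mem' := by
    rintro g g' ⟨h, hh⟩ ⟨h', hh'⟩
    exact ⟨h + h', by rw [mul_add, map_add, hh, hh']; rfl⟩
  zero_mem' := ⟨0, by simp⟩
  smul_mem' := by
    rintro c g ⟨h, hh⟩
    obtain ⟨a, -, ha⟩ := (mem_subring k).1 c.2
    exact ⟨a * h, by
      rw [show X 0 * (a * h) = a * (X 0 * h) by ring, map_mul, hh, ha]
      rfl⟩

theorem mem_q {g : SelfintSubring k} : g ∈ q k ↔
    ∃ h : SelfintPolyRing k, algebraMap _ (SelfintLocRing k) (X 0 * h) = g.1 := Iff.rfl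

instance q_isPrime : (q k).IsPrime := by
  constructor
  · rw [Ideal.ne_top_iff_one, mem_q]
    rintro ⟨h, hh⟩
    have := algebraMap_inj k (hh.trans (map_one (algebraMap (SelfintPolyRing k) _)).symm)
    simpa using congrArg (aeval ![(0 : k), 0]) this
  · intro g g' hg
    obtain ⟨a, -, ha⟩ := (mem_subring k).1 g.2
    obtain ⟨b, -, hb⟩ := (mem_subring k).1 g'.2
    obtain ⟨h, hh⟩ := hg
    have hab : X 0 * h = a * b := by
      apply algebraMap_inj k
      rw [hh, map_mul, ha, hb]
      rfl
    rcases (X_prime (i := 0) : Prime (X 0 : SelfintPolyRing k)).dvd_or_dvd ⟨h, hab.symm⟩ with ⟨c, hc⟩ | ⟨c, hc⟩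
    · exact Or.inl ⟨c, by rw [← hc, ha]⟩
    · exact Or.inr ⟨c, by rw [← hc, hb]⟩

theorem q_ne_bot : q k ≠ ⊥ := by
  have hmem : algebraMap (SelfintPolyRing k) (SelfintLocRing k) (X 0 * (X 0 - 1)) ∈
      SelfintSubring k := (mem_subring k).2 ⟨_, by simp, rfl⟩
  intro h
  have hq : (⟨_, hmem⟩ : SelfintSubring k) ∈ q k := ⟨_, rfl⟩
  rw [h, Ideal.mem_bot, Subtype.ext_iff] at hq
  have h0 : (X 0 * (X 0 - 1) : SelfintPolyRing k) = 0 :=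
    algebraMap_inj k (hq.trans (map_zero _).symm)
  rcases mul_eq_zero.1 h0 with h1 | h1
  · exact X_ne_zero _ h1
  · simpa using congrArg (aeval ![(0 : k), 0]) h1

/-- The cofactor `h` of an element `x * h` of `q` vanishes at `(1,1)`. -/
theorem aeval_cofactor {g : SelfintSubring k} {h : SelfintPolyRing k}
    (hh : algebraMap _ (SelfintLocRing k) (X 0 * h) = g.1) :
    aeval (fun _ : Fin 2 => (1 : k)) h = 0 := by
  obtain ⟨a, ha, hag⟩ := (mem_subring k).1 g.2
  obtain rfl : a = X 0 * h := algebraMap_inj k (hag.trans hh.symm)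
  simpa [eq_comm] using ha

/-- Powers of `g ∈ q` clear denominators relative to `R'`. -/
theorem exists_pow_mul_mem {g : SelfintSubring k} (hg : g ∈ q k) (s : SelfintLocRing k) :
    ∃ m : ℕ, g.1 ^ m * s ∈ SelfintSubring k := by
  obtain ⟨h, hh⟩ := hg
  obtain ⟨n, b, hb⟩ := IsLocalization.Away.surj (X 0 : SelfintPolyRing k) s
  refine ⟨n + 1, (mem_subring k).2 ⟨X 0 * h * (h ^ n * b), ?_, ?_⟩⟩
  · simp only [map_mul, aeval_X, aeval_cofactor k hh, zero_mul, mul_zero]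
  · rw [← hh]
    simp only [map_mul, map_pow, ← hb]
    ring

theorem exists_pow_mul_mem_ideal (p : Ideal (SelfintSubring k)) {g : SelfintSubring k}
    (hg : g ∈ q k) {s : SelfintLocRing k}
    (hs : s ∈ p.map (algebraMap (SelfintSubring k) (SelfintLocRing k))) :
    ∃ n : ℕ, ∃ r ∈ p, g.1 ^ n * s = r.1 := by
  induction hs using Submodule.span_induction with
  | mem s hs =>
    obtain ⟨r, hr, rfl⟩ := hs
    exact ⟨0, r, hr, by simp⟩
  | zero => exact ⟨0, 0, p.zero_mem, by simp⟩
  | add s t _ _ ihs iht =>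
    obtain ⟨n, r, hr, hrs⟩ := ihs
    obtain ⟨m, r', hr', hrt⟩ := iht
    refine ⟨n + m, g ^ m * r + g ^ n * r', p.add_mem (p.mul_mem_left _ hr) (p.mul_mem_left _ hr'), ?_⟩
    push_cast
    rw [← hrs, ← hrt]
    ring
  | smul a s _ ih =>
    obtain ⟨n, r, hr, hrs⟩ := ih
    obtain ⟨m, hm⟩ := exists_pow_mul_mem k hg a
    refine ⟨m + n, ⟨_, hm⟩ * r, p.mul_mem_left _ hr, ?_⟩
    push_cast
    rw [← hrs, smul_eq_mul]
    ring

/-- `qS` is contained in the kernel of evaluation at `(1,1)`. -/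
theorem map_q_ne_top :
    (q k).map (algebraMap (SelfintSubring k) (SelfintLocRing k)) ≠ ⊤ := by
  intro htop
  have hle : (q k).map (algebraMap (SelfintSubring k) (SelfintLocRing k)) ≤
      RingHom.ker (subst k (1 : k) 1 isUnit_one) := by
    rw [Ideal.map_le_iff_le_comap]
    rintro g ⟨h, hh⟩
    have h1 := aeval_cofactor k hh
    rw [const_eq] at h1
    change subst k (1 : k) 1 isUnit_one g.1 = 0
    rw [← hh, subst_algebraMap, map_mul, h1, mul_zero]
  rw [htop, top_le_iff] at hle
  exact RingHom.ker_ne_top _ hle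

theorem map_ne_top_of_height (p : PrimeSpectrum (SelfintSubring k)) (hp : Order.height p < 2) :
    p.asIdeal.map (algebraMap (SelfintSubring k) (SelfintLocRing k)) ≠ ⊤ := by
  intro htop
  have hqp : q k ≤ p.asIdeal := by
    intro g hg
    obtain ⟨n, r, hr, h⟩ := exists_pow_mul_mem_ideal k p.asIdeal hg
      ((Ideal.eq_top_iff_one _).1 htop)
    apply p.2.mem_of_pow_mem n
    convert hr
    apply Subtype.ext
    simpa using h
  rcases hqp.eq_or_lt with heq | hlt
  · exact map_q_ne_top k (heq ▸ htop)
  · have : IsDomain (SelfintLocRing k) := IsLocalization.isDomain_localization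
      (powers_le_nonZeroDivisors_of_noZeroDivisors (X_ne_zero 0))
    let b : PrimeSpectrum (SelfintSubring k) := ⟨⊥, Ideal.isPrime_bot⟩
    let c : PrimeSpectrum (SelfintSubring k) := ⟨q k, q_isPrime k⟩
    have hbc : b < c := (bot_lt_iff_ne_bot.2 (q_ne_bot k) : (⊥ : Ideal (SelfintSubring k)) < q k)
    have hcp : c < p := hlt
    have h1 := Order.height_add_one_le hbc
    have h2 := Order.height_add_one_le hcp
    have h3 : (2 : ℕ∞) ≤ Order.height p := calc
      (2 : ℕ∞) = 0 + 1 + 1 := by norm_num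
      _ ≤ Order.height b + 1 + 1 := by gcongr; exact zero_le
      _ ≤ Order.height c + 1 := by gcongr
      _ ≤ Order.height p := h2
    exact absurd hp (not_lt.2 h3)

end Selfint

/-- The selfintersection counterexample: let `k` be a field of characteristic 0,
`A = k[x,y]`, `S = k[x,x⁻¹,y]` the localization of `A` away from `x`, and
`R' = {p : p(0,0) = p(1,1)} ⊆ A ⊆ S`.  The `k`-algebra automorphism `F` of `S` with
`F(x) = x`, `F(y) = x·y` maps `R'` into `R'`; every ideal of height 1 in `R'` generates
a proper ideal in `S`; but the restriction of `F` to `R'` is not surjective, hence not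
an automorphism of `R'`. -/
theorem counterexample_selfintersection (k : Type*) [Field k] [CharZero k] :
    ∃ F : SelfintLocRing k ≃ₐ[k] SelfintLocRing k,
      F (algebraMap (SelfintPolyRing k) (SelfintLocRing k) (MvPolynomial.X 0)) =
        algebraMap (SelfintPolyRing k) (SelfintLocRing k) (MvPolynomial.X 0) ∧
      F (algebraMap (SelfintPolyRing k) (SelfintLocRing k) (MvPolynomial.X 1)) =
        algebraMap (SelfintPolyRing k) (SelfintLocRing k)
          (MvPolynomial.X 0 * MvPolynomial.X 1) ∧
      (∀ I : Ideal ↥(SelfintSubring k), Ideal.heightOf (R := ↥(SelfintSubring k)) I = 1 →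
        Ideal.map (algebraMap ↥(SelfintSubring k) (SelfintLocRing k)) I ≠ ⊤) ∧
      ∃ hFR : ∀ a ∈ SelfintSubring k, F a ∈ SelfintSubring k,
        ¬ Function.Surjective (fun r : ↥(SelfintSubring k) =>
          (⟨F r.1, hFR r.1 r.2⟩ : ↥(SelfintSubring k))) := by
  refine ⟨Selfint.auto k, ?_, ?_, ?_, ?_, ?_⟩
  · simp [Selfint.auto_algebraMap]
  · simp [Selfint.auto_algebraMap]
  · intro I hI htop
    have hlt : Ideal.heightOf I < 2 := by rw [hI]; norm_num
    simp only [Ideal.heightOf, iInf_lt_iff] at hlt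
    obtain ⟨p, hIp, hp⟩ := hlt
    exact Selfint.map_ne_top_of_height k p hp (top_le_iff.1 (htop ▸ Ideal.map_mono hIp))
  · intro s hs
    obtain ⟨a, ha, rfl⟩ := (Selfint.mem_subring k).1 hs
    refine (Selfint.mem_subring k).2 ⟨_, ?_, (Selfint.auto_algebraMap k a).symm⟩
    simp only [Selfint.const_eq] at ha ⊢
    rw [Selfint.aeval_substitution, Selfint.aeval_substitution]
    simpa only [mul_zero, mul_one] using ha
  · intro hsurj
    have hmem : algebraMap (SelfintPolyRing k) (SelfintLocRing k) (X 1 - X 0) ∈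
        SelfintSubring k := (Selfint.mem_subring k).2 ⟨_, by simp, rfl⟩
    obtain ⟨r, hr⟩ := hsurj ⟨_, hmem⟩
    obtain ⟨a, -, ha⟩ := (Selfint.mem_subring k).1 r.2
    have h := congrArg Subtype.val hr
    simp only [← ha, Selfint.auto_algebraMap] at h
    have h' := Selfint.algebraMap_inj k h
    -- Compare values at the points `(0,0)` and `(0,1)` of the line `x = 0`.
    have h0 := congrArg (aeval ![(0 : k), 0]) h'
    have h1 := congrArg (aeval ![(0 : k), 1]) h'
    rw [Selfint.aeval_substitution] at h0 h1
    simp only [zero_mul, map_sub, aeval_X, Matrix.cons_val_zero, Matrix.cons_val_one,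
      Matrix.cons_val_fin_one, sub_zero] at h0 h1
    exact zero_ne_one (h0.symm.trans h1)
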